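/- Let x₁ = 1 and x_{n+1} = exp(exp(exp(xₙ))). Then there exists a positive, increasing, smooth, concave function H on [0,∞) with H(xₙ) = n for all n, and for h(x) := 1/H'(x) the growth estimate H⁻¹(H(xₙ)+1) = x_{n+1} = exp(exp(exp(xₙ))) holds; in particular, for any ν ∈ (0,2), H⁻¹(H(xₙ)+1)/exp(exp(xₙ^ν)) → ∞ as n → ∞, so the bound H⁻¹(H(x)+t) ≤ C_t exp(exp(x^ν)) fails. -/

import Mathlib

/-!
The function `H` is affine except on the intervals `[x k, x k + 1]`, where its slope bends smoothly
from one constant to the next smaller one. The bending is done by a single profile `ramp`, the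
primitive of `Real.smoothTransition`: it is smooth and convex, vanishes on `(-∞, 0]`, and equals
`y - c` for `y ≥ 1`, where `c = 1 - ramp 1 ∈ [0, 1]`. With `X n = x (n + 1)` put
`H y = 1 + (y - 1) / 2 - ∑ k, (a k - a (k + 1)) * ramp (y - X k)`,
a locally finite sum. Requiring `H (X n) = n + 1` forces the recursion
`a (n + 1) = (1 - c * a n) / (X (n + 1) - X n - c)` for the slopes. Because the gaps
`X (n + 1) - X n` at least double, the bounds `1 / (X (n + 1) - X n) ≤ a n ≤ 1 / 2` propagate, and
they say precisely that the slopes decrease; hence `H` is concave. A concave function on `[0, ∞)`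
that is unbounded above is strictly increasing, and positivity follows from `H 0 = 1 / 2`.
-/

open Real Filter

/-- The primitive of `Real.smoothTransition` vanishing at `0`: a smooth convex ramp which is `0` on
the negative axis and has slope `1` beyond `1`. -/
noncomputable def ramp (y : ℝ) : ℝ := ∫ t in (0:ℝ)..y, Real.smoothTransition t

lemma hasDerivAt_ramp (y : ℝ) : HasDerivAt ramp (Real.smoothTransition y) y :=
  intervalIntegral.integral_hasDerivAt_right
    (Real.smoothTransition.continuous.intervalIntegrable _ _)
    (Real.smoothTransition.continuous.stronglyMeasurableAtFilter _ _)
    Real.smoothTransition.continuous.continuousAt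

lemma deriv_ramp : deriv ramp = Real.smoothTransition :=
  funext fun y => (hasDerivAt_ramp y).deriv

lemma contDiff_ramp : ContDiff ℝ (⊤ : ℕ∞) ramp := by
  rw [contDiff_infty_iff_deriv, deriv_ramp]
  exact ⟨fun y => (hasDerivAt_ramp y).differentiableAt, Real.smoothTransition.contDiff⟩

lemma convexOn_ramp : ConvexOn ℝ Set.univ ramp := by
  apply Monotone.convexOn_univ_of_deriv (fun y => (hasDerivAt_ramp y).differentiableAt)
  rw [deriv_ramp]
  exact Real.smoothTransition.monotone

lemma ramp_of_nonpos {y : ℝ} (hy : y ≤ 0) : ramp y = 0 := by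
  unfold ramp
  rw [intervalIntegral.integral_congr (g := fun _ => (0:ℝ))]
  · simp
  · intro t ht
    rw [Set.uIcc_of_ge hy] at ht
    exact Real.smoothTransition.zero_of_nonpos ht.2

lemma ramp_of_one_le {y : ℝ} (hy : 1 ≤ y) : ramp y = y - (1 - ramp 1) := by
  have h1 : ramp 1 + ∫ t in (1:ℝ)..y, Real.smoothTransition t = ramp y :=
    intervalIntegral.integral_add_adjacent_intervals
      (Real.smoothTransition.continuous.intervalIntegrable _ _)
      (Real.smoothTransition.continuous.intervalIntegrable _ _)
  rw [intervalIntegral.integral_congr (g := fun _ => (1:ℝ))] at h1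
  · simp at h1
    linarith
  · intro t ht
    rw [Set.uIcc_of_le hy] at ht
    exact Real.smoothTransition.one_of_one_le ht.1

lemma ramp_one_mem : 0 ≤ ramp 1 ∧ ramp 1 ≤ 1 := by
  constructor
  · exact intervalIntegral.integral_nonneg zero_le_one
      fun t _ => Real.smoothTransition.nonneg t
  · have h : ramp 1 ≤ ∫ _ in (0:ℝ)..1, (1:ℝ) :=
      intervalIntegral.integral_mono_on zero_le_one
        (Real.smoothTransition.continuous.intervalIntegrable _ _) (by simp)
        fun t _ => Real.smoothTransition.le_one t
    simpa using h

/-- The slopes of `H` on its affine pieces, for the abscissae `X`; the recursion makes `H` climb by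
exactly `1` from `X n` to `X (n + 1)`. -/
noncomputable def affSlope (X : ℕ → ℝ) : ℕ → ℝ
  | 0 => 1 / 2
  | n + 1 => (1 - (1 - ramp 1) * affSlope X n) / (X (n + 1) - X n - (1 - ramp 1))

/-- The `n`-th slope is at most `1 / 2` and at least `1 / (X (n + 1) - X n)`, which
makes the slopes decrease. -/
lemma affSlope_bounds {X : ℕ → ℝ} (h0 : 2 ≤ X 1 - X 0)
    (hD : ∀ n, 2 * (X (n + 1) - X n) ≤ X (n + 2) - X (n + 1))
    (hD2 : ∀ n, 2 ≤ X (n + 1) - X n) (n : ℕ) :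
    1 ≤ affSlope X n * (X (n + 1) - X n) ∧ affSlope X n ≤ 1 / 2 ∧ affSlope X (n + 1) ≤ affSlope X n := by
  obtain ⟨hr0, hr1⟩ := ramp_one_mem
  have step : ∀ n, 1 ≤ affSlope X n * (X (n + 1) - X n) → affSlope X (n + 1) ≤ affSlope X n := by
    intro n h
    have := hD2 n
    rw [affSlope, div_le_iff₀ (by linarith)]
    linarith
  have main : 1 ≤ affSlope X n * (X (n + 1) - X n) ∧ affSlope X n ≤ 1 / 2 := by
    induction n with
    | zero => exact ⟨by simp only [affSlope]; linarith, by simp [affSlope]⟩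
    | succ n ih =>
      obtain ⟨h1, h2⟩ := ih
      refine ⟨?_, (step n h1).trans h2⟩
      have hd := hD2 n
      have hdd := hD n
      have hpos : 0 < X (n + 1) - X n - (1 - ramp 1) := by linarith
      rw [affSlope, div_mul_eq_mul_div, le_div_iff₀ hpos]
      have : 1 / 2 ≤ 1 - (1 - ramp 1) * affSlope X n := by nlinarith
      nlinarith
  exact ⟨main.1, main.2, step n main.1⟩

/-- The `N`-th partial sum of the series defining `H`; it agrees with `H` on `(-∞, X N]`. -/
noncomputable def partialH (X : ℕ → ℝ) (N : ℕ) (y : ℝ) : ℝ :=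
  1 + (y - 1) / 2 - ∑ k ∈ Finset.range N, (affSlope X k - affSlope X (k + 1)) * ramp (y - X k)

/-- The interpolating function, a locally finite sum. -/
noncomputable def fullH (X : ℕ → ℝ) (y : ℝ) : ℝ :=
  1 + (y - 1) / 2 - ∑' k, (affSlope X k - affSlope X (k + 1)) * ramp (y - X k)

lemma fullH_eq {X : ℕ → ℝ} (hX : Monotone X) {N : ℕ} {y : ℝ} (hy : y ≤ X N) :
    fullH X y = partialH X N y := by
  unfold fullH partialH
  rw [tsum_eq_sum (s := Finset.range N)]
  intro k hk
  have : X N ≤ X k := hX (by simpa using hk)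
  rw [ramp_of_nonpos (by linarith), mul_zero]

lemma contDiff_partialH (X : ℕ → ℝ) (N : ℕ) : ContDiff ℝ (⊤ : ℕ∞) (partialH X N) := by
  unfold partialH
  refine ContDiff.sub (by fun_prop) (ContDiff.sum fun k _ => ?_)
  exact contDiff_const.mul (contDiff_ramp.comp (contDiff_id.sub contDiff_const))

lemma concaveOn_partialH {X : ℕ → ℝ} (ha : ∀ n, affSlope X (n + 1) ≤ affSlope X n) (N : ℕ) :
    ConcaveOn ℝ Set.univ (partialH X N) := by
  refine ⟨convex_univ, fun y _ z _ s t hs ht hst => ?_⟩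
  have key : ∑ k ∈ Finset.range N,
        (affSlope X k - affSlope X (k + 1)) * ramp (s * y + t * z - X k) ≤
      s * ∑ k ∈ Finset.range N, (affSlope X k - affSlope X (k + 1)) * ramp (y - X k) +
      t * ∑ k ∈ Finset.range N, (affSlope X k - affSlope X (k + 1)) * ramp (z - X k) := by
    rw [Finset.mul_sum, Finset.mul_sum, ← Finset.sum_add_distrib]
    refine Finset.sum_le_sum fun k _ => ?_
    have h := convexOn_ramp.2 (Set.mem_univ (y - X k)) (Set.mem_univ (z - X k)) hs ht hst
    simp only [smul_eq_mul] at h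
    have e : s * (y - X k) + t * (z - X k) = s * y + t * z - X k := by
      linear_combination (-X k) * hst
    rw [e] at h
    have := mul_le_mul_of_nonneg_left h (sub_nonneg.2 (ha k))
    linarith
  have e : 1 + (s * y + t * z - 1) / 2 = s * (1 + (y - 1) / 2) + t * (1 + (z - 1) / 2) := by
    linear_combination (-1 / 2) * hst
  simp only [partialH, smul_eq_mul]
  linarith

/-- Beyond `X N` the `N`-th partial sum is affine with slope `affSlope X N`. -/
lemma partialH_of_le {X : ℕ → ℝ} (hX0 : X 0 = 1) (hD2 : ∀ n, 2 ≤ X (n + 1) - X n) (N : ℕ) :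
    ∀ y, X N ≤ y → partialH X N y = N + 1 + affSlope X N * (y - X N) := by
  obtain ⟨hr0, hr1⟩ := ramp_one_mem
  induction N with
  | zero =>
    intro y _
    simp [partialH, affSlope, hX0]
    ring
  | succ N ih =>
    intro y hy
    have hd := hD2 N
    have h1 := ih y (by linarith)
    have h2 : partialH X (N + 1) y =
        partialH X N y - (affSlope X N - affSlope X (N + 1)) * ramp (y - X N) := by
      simp only [partialH, Finset.sum_range_succ]
      ring
    have h3 : affSlope X (N + 1) * (X (N + 1) - X N - (1 - ramp 1)) =
        1 - (1 - ramp 1) * affSlope X N := by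
      rw [affSlope, div_mul_cancel₀]
      linarith
    rw [h2, h1, ramp_of_one_le (by linarith)]
    push_cast
    linear_combination h3

/-- Concavity only involves finitely many points, so it passes to a function that agrees with concave
functions on the half-lines `(-∞, X N]` exhausting `ℝ`. -/
lemma concaveOn_of_agree {H : ℝ → ℝ} {X : ℕ → ℝ} {P : ℕ → ℝ → ℝ} (hX : Tendsto X atTop atTop)
    (hP : ∀ N, ConcaveOn ℝ Set.univ (P N)) (hH : ∀ N y, y ≤ X N → H y = P N y) :
    ConcaveOn ℝ Set.univ H := by
  refine ⟨convex_univ, fun y _ z _ s t hs ht hst => ?_⟩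
  obtain ⟨N, hN⟩ := (hX.eventually_ge_atTop (max y z)).exists
  have hy : y ≤ X N := (le_max_left _ _).trans hN
  have hz : z ≤ X N := (le_max_right _ _).trans hN
  have hyz : s • y + t • z ≤ X N := (convex_Iic (X N)) hy hz hs ht hst
  rw [hH N y hy, hH N z hz, hH N _ hyz]
  exact (hP N).2 trivial trivial hs ht hst

/-- A concave function each of whose values is exceeded further to the right is strictly increasing. -/
lemma strictMono_of_concave {H : ℝ → ℝ} (hH : ConcaveOn ℝ Set.univ H)
    (hub : ∀ y, ∃ w, y < w ∧ H y < H w) : StrictMono H := by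
  intro y z hyz
  by_contra! hle
  obtain ⟨w, hzw, hlt⟩ := hub z
  have := hH.slope_anti_adjacent (Set.mem_univ y) (Set.mem_univ w) hyz hzw
  have h1 : 0 < (H w - H z) / (w - z) := div_pos (by linarith) (by linarith)
  have h2 : (H z - H y) / (z - y) ≤ 0 := div_nonpos_of_nonpos_of_nonneg (by linarith) (by linarith)
  linarith

lemma two_mul_le_exp (z : ℝ) : 2 * z ≤ Real.exp z := by
  rcases le_or_gt z 0 with h | h
  · linarith [Real.exp_pos z]
  · have h1 : z ≤ Real.exp (z - 1) := by linarith [Real.add_one_le_exp (z - 1)]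
    have h2 : Real.exp z = Real.exp (z - 1) * Real.exp 1 := by
      rw [← Real.exp_add]; ring_nf
    have h3 : 2 ≤ Real.exp 1 := by linarith [Real.add_one_le_exp (1:ℝ)]
    rw [h2]
    nlinarith

/-- The triple exponential dominates `exp (exp (y ^ ν))` for every real `ν`. -/
lemma tendsto_tripleExp_div (ν : ℝ) :
    Tendsto (fun y : ℝ => Real.exp (Real.exp (Real.exp y)) / Real.exp (Real.exp (y ^ ν)))
      atTop atTop := by
  have hlo : (fun y : ℝ => y ^ ν) =o[atTop] Real.exp := isLittleO_rpow_exp_atTop ν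
  have hhalf := hlo.bound (c := 1 / 2) (by norm_num)
  have key : ∀ᶠ y : ℝ in atTop,
      Real.exp y / 2 ≤ Real.exp (Real.exp y) - Real.exp (y ^ ν) := by
    filter_upwards [hhalf, eventually_ge_atTop 0] with y hy h0
    have hp : 0 ≤ y ^ ν := Real.rpow_nonneg h0 ν
    rw [Real.norm_of_nonneg hp, Real.norm_of_nonneg (Real.exp_pos y).le] at hy
    have h1 : Real.exp (Real.exp y) =
        Real.exp (y ^ ν) * Real.exp (Real.exp y - y ^ ν) := by
      rw [← Real.exp_add]; ring_nf
    have h2 := Real.add_one_le_exp (Real.exp y - y ^ ν)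
    have h3 := Real.one_le_exp hp
    rw [h1]
    nlinarith
  have h := tendsto_atTop_mono' atTop key (Real.tendsto_exp_atTop.atTop_div_const two_pos)
  refine (Real.tendsto_exp_atTop.comp h).congr fun y => ?_
  simp [Real.exp_sub]

theorem osgood_counterexample
    (x : ℕ → ℝ) (hx1 : x 1 = 1)
    (hxrec : ∀ n : ℕ, 1 ≤ n → x (n + 1) = Real.exp (Real.exp (Real.exp (x n)))) :
    ∃ H : ℝ → ℝ,
      (∀ y : ℝ, 0 ≤ y → 0 < H y)
      ∧ StrictMonoOn H (Set.Ici (0:ℝ))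
      ∧ ContDiffOn ℝ (⊤ : ℕ∞) H (Set.Ici (0:ℝ))
      ∧ ConcaveOn ℝ (Set.Ici (0:ℝ)) H
      ∧ (∀ n : ℕ, 1 ≤ n → H (x n) = n)
      ∧ (∀ n : ℕ, 1 ≤ n → H (x (n + 1)) = H (x n) + 1)
      ∧ (∀ ν ∈ Set.Ioo (0:ℝ) 2,
          Tendsto (fun n : ℕ => x (n + 1) / Real.exp (Real.exp (x n ^ ν)))
            atTop atTop) := by
  obtain ⟨X, hXdef⟩ : ∃ X : ℕ → ℝ, ∀ n, X n = x (n + 1) := ⟨fun n => x (n + 1), fun _ => rfl⟩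
  have hX0 : X 0 = 1 := by rw [hXdef, hx1]
  have h8 : ∀ n, 8 * X n ≤ X (n + 1) := by
    intro n
    rw [hXdef (n + 1), hxrec (n + 1) (by omega), ← hXdef]
    linarith [two_mul_le_exp (X n), two_mul_le_exp (Real.exp (X n)),
      two_mul_le_exp (Real.exp (Real.exp (X n)))]
  have hXn : ∀ n : ℕ, (n : ℝ) + 1 ≤ X n := by
    intro n
    induction n with
    | zero => simp [hX0]
    | succ n ih =>
      push_cast
      have : (0:ℝ) ≤ n := n.cast_nonneg
      linarith [h8 n]
  have hX1 : ∀ n, 1 ≤ X n := fun n => by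
    have : (0:ℝ) ≤ n := n.cast_nonneg
    linarith [hXn n]
  have hD2 : ∀ n, 2 ≤ X (n + 1) - X n := fun n => by linarith [h8 n, hX1 n]
  have hD : ∀ n, 2 * (X (n + 1) - X n) ≤ X (n + 2) - X (n + 1) := fun n => by
    linarith [h8 (n + 1), hX1 n, hX1 (n + 1)]
  have hmono : Monotone X := monotone_nat_of_le_succ fun n => by linarith [hD2 n]
  have htop : Tendsto X atTop atTop :=
    tendsto_atTop_mono (fun n => (by linarith [hXn n] : (n : ℝ) ≤ X n)) tendsto_natCast_atTop_atTop
  have hagree : ∀ N y, y ≤ X N → fullH X y = partialH X N y := fun N y => fullH_eq hmono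
  have hval : ∀ n, fullH X (X n) = n + 1 := by
    intro n
    rw [hagree n _ le_rfl, partialH_of_le hX0 hD2 n _ le_rfl]
    simp
  have hvalx : ∀ n : ℕ, 1 ≤ n → fullH X (x n) = n := by
    intro n hn
    obtain ⟨m, rfl⟩ := Nat.exists_eq_add_of_le' hn
    rw [← hXdef, hval]
    push_cast
    rfl
  have hconc : ConcaveOn ℝ Set.univ (fullH X) :=
    concaveOn_of_agree htop
      (concaveOn_partialH fun n => (affSlope_bounds (hD2 0) hD hD2 n).2.2) hagree
  have hstrict : StrictMono (fullH X) := by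
    refine strictMono_of_concave hconc fun y => ?_
    obtain ⟨n, hn1, hn2⟩ := ((htop.eventually_gt_atTop y).and
      (tendsto_natCast_atTop_atTop.eventually_gt_atTop (fullH X y))).exists
    exact ⟨X n, hn1, by rw [hval]; linarith⟩
  have hsmooth : ContDiff ℝ (⊤ : ℕ∞) (fullH X) := by
    rw [contDiff_iff_contDiffAt]
    intro y
    obtain ⟨N, hN⟩ := (htop.eventually_gt_atTop y).exists
    refine (contDiff_partialH X N).contDiffAt.congr_of_eventuallyEq ?_
    filter_upwards [Iio_mem_nhds hN] with z hz
    exact hagree N z (le_of_lt hz)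
  have hzero : fullH X 0 = 1 / 2 := by
    rw [hagree 0 0 (by rw [hX0]; norm_num)]
    norm_num [partialH]
  refine ⟨fullH X, fun y hy => ?_, hstrict.strictMonoOn _, hsmooth.contDiffOn,
    hconc.subset (Set.subset_univ _) (convex_Ici 0), hvalx, fun n hn => ?_, fun ν _ => ?_⟩
  · have := hstrict.monotone hy
    linarith
  · rw [hvalx (n + 1) (by omega), hvalx n hn]
    push_cast
    rfl
  · have hx : Tendsto x atTop atTop := by
      rw [← tendsto_add_atTop_iff_nat 1]
      exact htop.congr hXdef
    refine ((tendsto_tripleExp_div ν).comp hx).congr' ?_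
    filter_upwards [eventually_ge_atTop 1] with n hn
    simp only [Function.comp, hxrec n hn]
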